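/- arXiv:2102.01149 — 2 statements merged into one kernel-verified Lean document; each statement's English description precedes it below -/
import Mathlib

section
/- The expected cost of the adaptive greedy policy satisfies E[C(σ)] ≤ α·E[C(π*)]·Σ_{i=1}^{|N(σ)|} ε_i/(Q − f(ρ_i)). -/
/-!
Common framework for the Stochastic Submodular Cover problem
(Hellerstein–Kletenik–Parthasarathy, "A Tight Bound for Stochastic Submodular Cover").
-/

namespace SSC

open Finset
open scoped Classical

noncomputable section

variable {E O : Type*}

/-- A subrealization assigns to each item either a state or `none` (unassigned).
A realization corresponds to the case where every item is assigned. -/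
abbrev Sub (E O : Type*) := E → Option O

/-- `subext ψ ψ'` means `ψ ⊆ ψ'` as partial assignments of states to items. -/
def subext (ψ ψ' : Sub E O) : Prop := ∀ e o, ψ e = some o → ψ' e = some o

/-- `ssubext ψ ψ'` means `ψ ⊂ ψ'` (strict extension). -/
def ssubext (ψ ψ' : Sub E O) : Prop := subext ψ ψ' ∧ ψ ≠ ψ'

/-- Extend a subrealization `ψ` by assigning state `o` to item `e`. -/
def updateSub [DecidableEq E] (ψ : Sub E O) (e : E) (o : O) : Sub E O :=
  fun e' => if e' = e then some o else ψ e'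

/-- View a (full) realization as a subrealization. -/
def toSub (φ : E → O) : Sub E O := fun e => some (φ e)

variable [Fintype E] [DecidableEq E] [Fintype O] [DecidableEq O]

/-- An instance of the Stochastic Submodular Cover problem: positive item costs `c`,
a probability mass function `p` on realizations with mutually independent item states,
and a utility function `f` on subrealizations which is zero on the empty subrealization,
nonnegative, monotone and submodular (pointwise polymatroid), and equal to the goal
value `Q > 0` on every full realization (coverability). -/
structure Problem (E O : Type*) [Fintype E] [DecidableEq E] [Fintype O] [DecidableEq O] where
  c : E → ℝ
  c_pos : ∀ e, 0 < c e
  p : (E → O) → ℝ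
  p_nonneg : ∀ φ, 0 ≤ p φ
  p_sum : ∑ φ : E → O, p φ = 1
  indep : ∀ φ : E → O, p φ = ∏ e : E, ∑ φ' : E → O, if φ' e = φ e then p φ' else 0
  f : Sub E O → ℝ
  f_nonneg : ∀ ψ, 0 ≤ f ψ
  f_empty : f (fun _ => none) = 0
  f_mono : ∀ ψ ψ' : Sub E O, subext ψ ψ' → f ψ ≤ f ψ'
  f_submod : ∀ (ψ ψ' : Sub E O) (e : E) (o : O), subext ψ ψ' → ψ' e = none →
      f (updateSub ψ' e o) - f ψ' ≤ f (updateSub ψ e o) - f ψ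
  Q : ℝ
  Q_pos : 0 < Q
  f_cover : ∀ φ : E → O, f (toSub φ) = Q

variable (M : Problem E O)

/-- Expectation of a random variable `X` with respect to the random realization `Φ`. -/
def Ex (X : (E → O) → ℝ) : ℝ := ∑ φ : E → O, M.p φ * X φ

/-- Probability of an event `A` of the random realization `Φ`. -/
def Pr (A : (E → O) → Prop) : ℝ := ∑ φ : E → O, if A φ then M.p φ else 0

/-- Conditional expectation `E[X | A]`. -/
def cEx (X : (E → O) → ℝ) (A : (E → O) → Prop) : ℝ :=
  (∑ φ : E → O, if A φ then M.p φ * X φ else 0) / Pr M A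

/-- The random marginal increase in utility `F_ψ(e)` from observing the state of `e`. -/
def Fm (ψ : Sub E O) (e : E) (φ : E → O) : ℝ := M.f (updateSub ψ e (φ e)) - M.f ψ

/-- The unit price `υ(e|ψ) = c(e) / E[F_ψ(e)]`. -/
def price (ψ : Sub E O) (e : E) : ℝ := M.c e / Ex M (Fm M ψ e)

/-- An adaptive covering policy: at every subrealization `ψ` with `f ψ < Q` it selects an
item outside `dom ψ`. -/
def IsPolicy (π : Sub E O → E) : Prop := ∀ ψ : Sub E O, M.f ψ < M.Q → ψ (π ψ) = none

/-- The `α`-approximate adaptive greedy policy: at every `ψ` with `f ψ < Q` the unit price of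
the selected item `σ ψ` is at most `α` times the minimum unit price, i.e.
`υ(σ ψ | ψ) ≤ α · υ(e | ψ)` for every `e ∉ dom ψ`, written multiplicatively so that infinite
unit prices (zero expected marginal utility) are handled correctly. -/
def IsGreedy (α : ℝ) (σ : Sub E O → E) : Prop :=
  IsPolicy M σ ∧
    ∀ ψ : Sub E O, M.f ψ < M.Q → ∀ e : E, ψ e = none →
      M.c (σ ψ) * Ex M (Fm M ψ e) ≤ α * M.c e * Ex M (Fm M ψ (σ ψ))

/-- One step of executing policy `π` on realization `φ`. -/
def stepPol (π : Sub E O → E) (φ : E → O) (ψ : Sub E O) : Sub E O :=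
  if M.f ψ < M.Q then updateSub ψ (π ψ) (φ (π ψ)) else ψ

/-- The subrealization reached after `n` steps of executing `π` on `φ`. -/
def execAux (π : Sub E O → E) (φ : E → O) : ℕ → Sub E O
  | 0 => fun _ => none
  | n + 1 => stepPol M π φ (execAux π φ n)

/-- The cover `Ψ(π)` constructed by executing `π` on realization `φ`. -/
def cover (π : Sub E O → E) (φ : E → O) : Sub E O := execAux M π φ (Fintype.card E)

/-- `ψ` is visited when executing `π` on realization `φ`. -/
def visits (π : Sub E O → E) (φ : E → O) (ψ : Sub E O) : Prop := ∃ n, execAux M π φ n = ψ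

/-- The set `S(π)` of items selected when executing `π` on `φ`. -/
def Ssel (π : Sub E O → E) (φ : E → O) : Finset E :=
  Finset.univ.filter fun e => cover M π φ e ≠ none

/-- The cost `C(π)` incurred when executing `π` on `φ`. -/
def C (π : Sub E O → E) (φ : E → O) : ℝ := ∑ e ∈ Ssel M π φ, M.c e

/-- An adaptive covering policy of minimum expected cost. -/
def IsOptimal (π : Sub E O → E) : Prop :=
  IsPolicy M π ∧ ∀ π' : Sub E O → E, IsPolicy M π' → Ex M (C M π) ≤ Ex M (C M π')

/-- `N(π)`: the non-leaf nodes of the decision tree of `π` — subrealizations with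
`f ψ < Q` that are visited with positive probability. -/
def Nnodes (π : Sub E O → E) : Finset (Sub E O) :=
  Finset.univ.filter fun ψ => M.f ψ < M.Q ∧ 0 < Pr M fun φ => visits M π φ ψ

/-- The event `ψ ↝ i`, for a marker located at utility value `b = f(ρ_i)`:
`ψ` is the last subrealization visited by `σ` (on the given realization) whose
utility is at most `b`. -/
def leadsTo (σ : Sub E O → E) (b : ℝ) (ψ : Sub E O) (φ : E → O) : Prop :=
  visits M σ φ ψ ∧ M.f ψ ≤ b ∧
    ∀ ψ' : Sub E O, visits M σ φ ψ' → M.f ψ' ≤ b → subext ψ' ψ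

/-- The revenue `λ_i = υ_ψ · ε_i` collected by `σ` from the marker located at utility
value `b = f(ρ_i)` with interval length `εi`, where `ψ` is the unique subrealization
with `ψ ↝ i`. -/
def lam (σ : Sub E O → E) (b εi : ℝ) (φ : E → O) : ℝ :=
  ∑ ψ : Sub E O, if leadsTo M σ b ψ φ then price M ψ (σ ψ) * εi else 0

/-- The revenue `μ(e)` collected by the optimal policy `πs` from item `e`
(relative to the greedy policy `σ`, both executed on the same realization). -/
def mu (σ πs : Sub E O → E) (e : E) (φ : E → O) : ℝ :=
  if e ∈ Ssel M πs φ then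
    if e ∈ Ssel M σ φ then
      ∑ ψ : Sub E O,
        if visits M σ φ ψ ∧ M.f ψ < M.Q ∧ σ ψ = e then price M ψ e * Fm M ψ e φ else 0
    else M.c e
  else 0

/-- The total revenue `μ*` collected by the optimal policy. -/
def muStar (σ πs : Sub E O → E) (φ : E → O) : ℝ := ∑ e : E, mu M σ πs e φ

/-- Replay of the internal state of policy `πs` in the second stage of the hybrid policy:
starting from the empty subrealization, repeatedly query `πs`; an item whose state is
already recorded in `ψ'` is not re-selected, its recorded state being used instead. -/
def replayAux (πs : Sub E O → E) (ψ' : Sub E O) : ℕ → Sub E O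
  | 0 => fun _ => none
  | n + 1 =>
    if M.f (replayAux πs ψ' n) < M.Q then
      match ψ' (πs (replayAux πs ψ' n)) with
      | some o => updateSub (replayAux πs ψ' n) (πs (replayAux πs ψ' n)) o
      | none => replayAux πs ψ' n
    else replayAux πs ψ' n

/-- The hybrid policy `π^ψ0`: follow `σ` until `ψ0` is visited, then switch to executing
`πs` from the root of its tree, never re-selecting an item of `dom ψ0` and using the
state recorded in `ψ0` instead. -/
def hybrid (σ πs : Sub E O → E) (ψ0 : Sub E O) : Sub E O → E := fun ψ' =>
  if subext ψ0 ψ' then πs (replayAux M πs ψ' (Fintype.card E)) else σ ψ'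

/-- `δ⁺_ψ0(e)`: the marginal utility obtained by the hybrid policy `π^ψ0` when it selects
`e` during its second stage, and `0` if `e` is not selected in the second stage. -/
def deltaPlus (σ πs : Sub E O → E) (ψ0 : Sub E O) (e : E) (φ : E → O) : ℝ :=
  ∑ ψ' : Sub E O,
    if subext ψ0 ψ' ∧ visits M (hybrid M σ πs ψ0) φ ψ' ∧
        ssubext ψ' (cover M (hybrid M σ πs ψ0) φ) ∧ hybrid M σ πs ψ0 ψ' = e
    then Fm M ψ' e φ else 0


/-!
For a level `b < Q`, let `ψ ↝ b` say that `ψ` is the last node of `σ` with utility at most `b`,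
and let `u b` be the expected unit price of `σ` at that node. The utility gained by `σ` on leaving
a node is the sum of the `ε i` over the levels `f (ρ i)` that it skips, so
`E[C(σ)] ≤ ∑ i, ε i * u (f (ρ i))`, and it suffices to prove `(Q - b) * u b ≤ α * E[C(π)]`.

By submodularity `Q - b` is at most the sum of the marginal utilities at `ψ` of the items
`e ∉ dom ψ` selected by `π`. Whether `π` selects `e` does not depend on the state of `e`, so the
marginal utility of `e`, priced at `ψ`, costs in expectation at most `α * c e`. If `e` is the item
that `σ` selects at `ψ`, however, the event `ψ ↝ b` does depend on the state of `e`; it is then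
enlarged to the event that `σ` visits `ψ` at all. The enlarged events are still disjoint for fixed
`e`, so in total `e` is charged at most `α * c e` times the probability that `π` selects it.
-/

section Subrealizations

variable {ι κ : Type*} {ψ ψ' ψ'' : Sub ι κ} {e : ι} {o : κ}

lemma subext.refl (ψ : Sub ι κ) : subext ψ ψ := fun _ _ h => h

lemma subext.trans (h : subext ψ ψ') (h' : subext ψ' ψ'') : subext ψ ψ'' :=
  fun e o he => h' e o (h e o he)

lemma subext.antisymm (h : subext ψ ψ') (h' : subext ψ' ψ) : ψ = ψ' :=
  funext fun e => Option.ext fun o => ⟨h e o, h' e o⟩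

lemma subext.eq_none (h : subext ψ ψ') (he : ψ' e = none) : ψ e = none :=
  Option.eq_none_iff_forall_ne_some.2 fun o ho => by simp [h e o ho] at he

lemma subext_toSub_iff {φ : ι → κ} : subext ψ (toSub φ) ↔ ∀ e o, ψ e = some o → φ e = o := by
  simp [subext, toSub]

variable [DecidableEq ι]

lemma updateSub_eq_update (ψ : Sub ι κ) (e : ι) (o : κ) :
    updateSub ψ e o = Function.update ψ e (some o) := by
  ext1 e'
  simp [updateSub, Function.update_apply]

lemma updateSub_self (ψ : Sub ι κ) (e : ι) (o : κ) : updateSub ψ e o e = some o := by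
  simp [updateSub]

lemma subext_updateSub (h : ∀ o', ψ e = some o' → o' = o) : subext ψ (updateSub ψ e o) := by
  intro e' o' h'
  rw [updateSub_eq_update]
  obtain rfl | he := eq_or_ne e' e
  · simp [h o' h']
  · simpa [he] using h'

lemma updateSub_subext (h : subext ψ ψ') (he : ψ' e = some o) : subext (updateSub ψ e o) ψ' := by
  intro e' o' h'
  rw [updateSub_eq_update] at h'
  obtain rfl | hne := eq_or_ne e' e
  · simp_all
  · exact h e' o' (by simpa [hne] using h')

/-- The subrealization obtained from `ψ` by observing under `φ` the items of `S`, the states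
recorded in `ψ` for these items being overwritten. -/
def observe (ψ : Sub ι κ) (φ : ι → κ) (S : Finset ι) : Sub ι κ :=
  fun e => if e ∈ S then some (φ e) else ψ e

lemma observe_empty (ψ : Sub ι κ) (φ : ι → κ) : observe ψ φ ∅ = ψ :=
  funext fun e => by simp [observe]

lemma observe_insert (ψ : Sub ι κ) (φ : ι → κ) (e : ι) (S : Finset ι) :
    observe ψ φ (insert e S) = updateSub (observe ψ φ S) e (φ e) := by
  ext1 e'
  obtain rfl | he := eq_or_ne e' e <;> simp [observe, updateSub, *]

lemma subext_observe {S : Finset ι} (hS : ∀ e ∈ S, ψ e = none) (φ : ι → κ) :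
    subext ψ (observe ψ φ S) := by
  intro e o he
  have heS : e ∉ S := fun h => by simp [hS e h] at he
  simpa [observe, heS] using he

end Subrealizations

lemma dependsOn_of_imp {ι κ : Type*} {A : (ι → κ) → Prop} {s : Set ι}
    (h : ∀ φ φ', (∀ i ∈ s, φ i = φ' i) → A φ → A φ') : DependsOn A s :=
  fun φ φ' hs => propext ⟨h φ φ' hs, h φ' φ fun i hi => (hs i hi).symm⟩

section Expectation

lemma Ex_mono {X Y : (E → O) → ℝ} (h : ∀ φ, 0 < M.p φ → X φ ≤ Y φ) : Ex M X ≤ Ex M Y := by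
  refine sum_le_sum fun φ _ => ?_
  obtain hφ | hφ := (M.p_nonneg φ).eq_or_lt
  · simp [← hφ]
  · exact mul_le_mul_of_nonneg_left (h φ hφ) hφ.le

lemma Ex_nonneg {X : (E → O) → ℝ} (h : ∀ φ, 0 ≤ X φ) : 0 ≤ Ex M X :=
  sum_nonneg fun φ _ => mul_nonneg (M.p_nonneg φ) (h φ)

lemma Ex_const (a : ℝ) : Ex M (fun _ => a) = a := by
  rw [Ex, ← sum_mul, M.p_sum, one_mul]

lemma Ex_sum {ι : Type*} (s : Finset ι) (X : ι → (E → O) → ℝ) :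
    Ex M (fun φ => ∑ i ∈ s, X i φ) = ∑ i ∈ s, Ex M (X i) := by
  simp only [Ex, mul_sum]
  exact sum_comm

lemma Ex_mul_const (X : (E → O) → ℝ) (a : ℝ) : Ex M (fun φ => X φ * a) = Ex M X * a := by
  simp only [Ex, sum_mul, mul_assoc]

lemma Ex_ite_const (A : (E → O) → Prop) [DecidablePred A] (a : ℝ) :
    Ex M (fun φ => if A φ then a else 0) = Pr M A * a := by
  rw [Ex, Pr, sum_mul]
  exact sum_congr rfl fun φ _ => by by_cases h : A φ <;> simp [h]

lemma Pr_eq_Ex (A : (E → O) → Prop) : Pr M A = Ex M fun φ => if A φ then 1 else 0 := by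
  rw [Ex_ite_const, mul_one]

lemma Pr_nonneg (A : (E → O) → Prop) : 0 ≤ Pr M A := by
  rw [Pr_eq_Ex]
  exact Ex_nonneg M fun φ => by positivity

lemma Pr_pos {A : (E → O) → Prop} {φ : E → O} (hφ : 0 < M.p φ) (hA : A φ) : 0 < Pr M A := by
  refine sum_pos' (fun φ' _ => ?_) ⟨φ, mem_univ φ, by simpa [hA] using hφ⟩
  split_ifs
  exacts [M.p_nonneg φ', le_rfl]

lemma sum_Pr_le_Pr {ι : Type*} {s : Finset ι} {A : ι → (E → O) → Prop} {B : (E → O) → Prop}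
    (hAB : ∀ i ∈ s, ∀ φ, A i φ → B φ)
    (hdisj : ∀ φ, ∀ i ∈ s, ∀ j ∈ s, A i φ → A j φ → i = j) :
    ∑ i ∈ s, Pr M (A i) ≤ Pr M B := by
  simp only [Pr_eq_Ex]
  rw [← Ex_sum]
  refine Ex_mono M fun φ _ => ?_
  rw [sum_boole]
  split_ifs with hB
  · have hcard : #{i ∈ s | A i φ} ≤ 1 :=
      card_le_one.2 fun i hi j hj => by
        rw [mem_filter] at hi hj
        exact hdisj φ i hi.1 j hj.1 hi.2 hj.2
    exact_mod_cast hcard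
  · have hempty : {i ∈ s | A i φ} = ∅ :=
      filter_eq_empty_iff.2 fun i hi hA => hB (hAB i hi φ hA)
    simp [hempty]

lemma sum_Pr_state (e : E) : ∑ o, Pr M (fun φ => φ e = o) = 1 := by
  simp only [Pr]
  rw [sum_comm, ← M.p_sum]
  exact sum_congr rfl fun φ _ =>
    (Fintype.sum_eq_single (φ e) fun o ho => if_neg ho.symm).trans (if_pos rfl)

lemma p_eq_prod_Pr (φ : E → O) : M.p φ = ∏ e, Pr M (fun φ' => φ' e = φ e) := by
  rw [M.indep φ]
  simp only [Pr]
  congr!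

lemma p_mul_Pr_state (φ : E → O) (e : E) (o : O) :
    M.p φ * Pr M (fun φ' => φ' e = o)
      = M.p (Function.update φ e o) * Pr M (fun φ' => φ' e = φ e) := by
  have hfactor : ∀ φ : E → O, M.p φ =
      Pr M (fun φ' => φ' e = φ e) * ∏ e' ∈ univ.erase e, Pr M (fun φ' => φ' e' = φ e') :=
    fun φ => (p_eq_prod_Pr M φ).trans
      (mul_prod_erase univ (fun e' => Pr M fun φ' => φ' e' = φ e') (mem_univ e)).symm
  have hrest : ∏ e' ∈ univ.erase e, Pr M (fun φ' => φ' e' = Function.update φ e o e')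
      = ∏ e' ∈ univ.erase e, Pr M (fun φ' => φ' e' = φ e') :=
    prod_congr rfl fun e' he' => by
      rw [Function.update_of_ne (ne_of_mem_erase he')]
  rw [hfactor φ, hfactor (Function.update φ e o), hrest, Function.update_self]
  ring

lemma Ex_resample (e : E) (X : (E → O) → ℝ) :
    Ex M X = Ex M fun φ => ∑ o, Pr M (fun φ' => φ' e = o) * X (Function.update φ e o) := by
  let swap : (E → O) × O → (E → O) × O := fun x => (Function.update x.1 e x.2, x.1 e)
  have hswap : Function.Involutive swap := fun x => by simp [swap]
  let w : (E → O) × O → ℝ := fun x => M.p x.1 * Pr M (fun φ' => φ' e = x.2)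
  calc Ex M X = ∑ φ, ∑ o, w (φ, o) * X φ := by
        simp only [Ex, w, ← sum_mul, ← mul_sum, sum_Pr_state, mul_one]
    _ = ∑ x, w x * X x.1 := by rw [Fintype.sum_prod_type]
    _ = ∑ x, w (swap x) * X (swap x).1 :=
        (Equiv.sum_comp hswap.toPerm fun x => w x * X x.1).symm
    _ = ∑ x, w x * X (swap x).1 := by simp only [w, swap, ← p_mul_Pr_state]
    _ = _ := by simp only [Fintype.sum_prod_type, Ex, w, swap, mul_sum, mul_assoc]

lemma Ex_mul_state {e : E} {X : (E → O) → ℝ} (hX : DependsOn X {e}ᶜ) (g : O → ℝ) :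
    Ex M (fun φ => X φ * g (φ e)) = Ex M X * Ex M (fun φ => g (φ e)) := by
  have hXe : ∀ φ o, X (Function.update φ e o) = X φ := fun φ o =>
    hX fun e' he' => Function.update_of_ne he' _ _
  have hg : Ex M (fun φ => g (φ e)) = ∑ o, Pr M (fun φ' => φ' e = o) * g o := by
    rw [Ex_resample M e]
    simp only [Function.update_self, Ex_const]
  rw [hg, ← Ex_mul_const, Ex_resample M e]
  simp only [hXe, Function.update_self, mul_sum, mul_left_comm]

lemma Ex_ite_Fm {e : E} {A : (E → O) → Prop} [DecidablePred A] (hA : DependsOn A {e}ᶜ)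
    (ψ : Sub E O) :
    Ex M (fun φ => if A φ then Fm M ψ e φ else 0) = Pr M A * Ex M (Fm M ψ e) := by
  have hind : DependsOn (fun φ => if A φ then (1 : ℝ) else 0) {e}ᶜ := fun φ φ' h => by
    simp only [hA h]
  have hmul := Ex_mul_state M hind fun o => M.f (updateSub ψ e o) - M.f ψ
  simp only [ite_mul, one_mul, zero_mul, Ex_ite_const, mul_one] at hmul
  exact hmul

end Expectation

section Utility

lemma Fm_nonneg {ψ : Sub E O} {e : E} (h : ψ e = none) (φ : E → O) : 0 ≤ Fm M ψ e φ :=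
  sub_nonneg.2 (M.f_mono _ _ (subext_updateSub (by simp [h])))

lemma f_le_Q_of_subext_toSub {ψ : Sub E O} {φ : E → O} (h : subext ψ (toSub φ)) : M.f ψ ≤ M.Q :=
  M.f_cover φ ▸ M.f_mono _ _ h

lemma f_observe_sub_le (φ : E → O) {ψ : Sub E O} {S : Finset E} (hS : ∀ e ∈ S, ψ e = none) :
    M.f (observe ψ φ S) - M.f ψ ≤ ∑ e ∈ S, Fm M ψ e φ := by
  induction S using Finset.induction_on with
  | empty => simp [observe_empty]
  | insert e S he ih =>
    have hS' : ∀ e ∈ S, ψ e = none := fun e' h => hS e' (mem_insert_of_mem h)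
    have hnone : observe ψ φ S e = none := by
      simp [observe, he, hS e (mem_insert_self e S)]
    have hsub := M.f_submod _ _ e (φ e) (subext_observe hS' φ) hnone
    rw [sum_insert he, observe_insert, Fm]
    linarith [ih hS']

lemma Q_sub_le_sum_Fm (ψ : Sub E O) (φ : E → O) :
    M.Q - M.f ψ ≤ ∑ e with ψ e = none, Fm M ψ e φ := by
  have hfull : observe ψ φ {e | ψ e = none} = toSub fun e => (ψ e).getD (φ e) := by
    ext1 e
    cases h : ψ e <;> simp [observe, toSub, h]
  rw [← M.f_cover fun e => (ψ e).getD (φ e), ← hfull]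
  exact f_observe_sub_le M φ (by simp)

lemma exists_Ex_Fm_pos {ψ : Sub E O} (hψ : M.f ψ < M.Q) :
    ∃ e, ψ e = none ∧ 0 < Ex M (Fm M ψ e) := by
  have hsum : 0 < ∑ e with ψ e = none, Ex M (Fm M ψ e) :=
    calc 0 < M.Q - M.f ψ := sub_pos.2 hψ
      _ = Ex M (fun _ => M.Q - M.f ψ) := (Ex_const M _).symm
      _ ≤ Ex M (fun φ => ∑ e with ψ e = none, Fm M ψ e φ) :=
          Ex_mono M fun φ _ => Q_sub_le_sum_Fm M ψ φ
      _ = _ := Ex_sum M _ _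
  obtain ⟨e, he, hpos⟩ := exists_lt_of_sum_lt (f := fun _ => (0 : ℝ)) (by simpa using hsum)
  exact ⟨e, (mem_filter.1 he).2, hpos⟩

end Utility

section Execution

variable {M} {π : Sub E O → E} {φ φ' : E → O} {ψ ψ' : Sub E O} {m n : ℕ}

lemma execAux_succ_of_lt (h : M.f (execAux M π φ n) < M.Q) :
    execAux M π φ (n + 1) =
      updateSub (execAux M π φ n) (π (execAux M π φ n)) (φ (π (execAux M π φ n))) :=
  if_pos h

lemma execAux_succ_of_ge (h : M.Q ≤ M.f (execAux M π φ n)) :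
    execAux M π φ (n + 1) = execAux M π φ n :=
  if_neg h.not_gt

lemma execAux_subext_toSub (n : ℕ) : subext (execAux M π φ n) (toSub φ) := by
  induction n with
  | zero => exact fun e o h => nomatch h
  | succ n ih =>
    obtain h | h := lt_or_ge (M.f (execAux M π φ n)) M.Q
    · rw [execAux_succ_of_lt h]
      exact updateSub_subext ih rfl
    · rwa [execAux_succ_of_ge h]

lemma execAux_subext_succ (n : ℕ) : subext (execAux M π φ n) (execAux M π φ (n + 1)) := by
  obtain h | h := lt_or_ge (M.f (execAux M π φ n)) M.Q
  · rw [execAux_succ_of_lt h]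
    exact subext_updateSub fun o ho =>
      (subext_toSub_iff.1 (execAux_subext_toSub n) _ o ho).symm
  · rw [execAux_succ_of_ge h]
    exact subext.refl _

lemma execAux_subext_of_le (h : m ≤ n) : subext (execAux M π φ m) (execAux M π φ n) := by
  induction n, h using Nat.le_induction with
  | base => exact subext.refl _
  | succ n _ ih => exact ih.trans (execAux_subext_succ n)

lemma execAux_eq_of_subext_toSub (h : subext (execAux M π φ n) (toSub φ')) :
    execAux M π φ' n = execAux M π φ n := by
  induction n with
  | zero => rfl
  | succ n ih =>
    have hn := ih ((execAux_subext_succ n).trans h)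
    obtain hf | hf := lt_or_ge (M.f (execAux M π φ n)) M.Q
    · have hstate : φ' (π (execAux M π φ n)) = φ (π (execAux M π φ n)) :=
        subext_toSub_iff.1 h _ _ (by rw [execAux_succ_of_lt hf, updateSub_self])
      rw [execAux_succ_of_lt (hn ▸ hf), execAux_succ_of_lt hf, hn, hstate]
    · rw [execAux_succ_of_ge (hn ▸ hf), execAux_succ_of_ge hf, hn]

lemma IsPolicy.le_card_execAux (hπ : IsPolicy M π) (h : M.f (execAux M π φ n) < M.Q) :
    n ≤ #{e | execAux M π φ n e ≠ none} := by
  induction n with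
  | zero => exact Nat.zero_le _
  | succ n ih =>
    have hn : M.f (execAux M π φ n) < M.Q := (M.f_mono _ _ (execAux_subext_succ n)).trans_lt h
    refine (ih hn).trans_lt (card_lt_card (ssubset_iff_of_subset ?_ |>.2 ?_))
    · exact monotone_filter_right _ fun e _ he he' =>
        he ((execAux_subext_succ n).eq_none he')
    · refine ⟨π (execAux M π φ n), ?_, by simp [hπ _ hn]⟩
      simp [execAux_succ_of_lt hn, updateSub_self]

lemma IsPolicy.Q_le_f_cover (hπ : IsPolicy M π) (φ : E → O) : M.Q ≤ M.f (cover M π φ) := by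
  by_contra! h
  have hcard : #{e | cover M π φ e ≠ none} < Fintype.card E :=
    card_lt_univ_of_notMem (x := π (cover M π φ)) fun hmem =>
      (mem_filter.1 hmem).2 (hπ _ h)
  exact (hπ.le_card_execAux h).not_gt hcard

lemma mem_Ssel {e : E} : e ∈ Ssel M π φ ↔ cover M π φ e ≠ none := by
  simp [Ssel]

lemma dependsOn_mem_Ssel (π : Sub E O → E) (e : E) :
    DependsOn (fun φ => e ∈ Ssel M π φ) {e}ᶜ := by
  refine dependsOn_of_imp fun φ φ' h => not_imp_not.1 fun he => ?_
  rw [mem_Ssel, not_not] at he ⊢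
  have hsub : subext (cover M π φ') (toSub φ) := subext_toSub_iff.2 fun e' o ho => by
    have hne : e' ≠ e := by rintro rfl; simp [he] at ho
    rw [h e' hne]
    exact subext_toSub_iff.1 (execAux_subext_toSub _) e' o ho
  have hcover : cover M π φ = cover M π φ' := execAux_eq_of_subext_toSub hsub
  rw [hcover, he]

lemma IsPolicy.Q_sub_le_sum_Ssel (hπ : IsPolicy M π) (h : subext ψ (toSub φ)) :
    M.Q - M.f ψ ≤ ∑ e with ψ e = none, if e ∈ Ssel M π φ then Fm M ψ e φ else 0 := by
  have hcover : subext (cover M π φ) (observe ψ φ {e | ψ e = none ∧ e ∈ Ssel M π φ}) := by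
    intro e o ho
    have hsel : e ∈ Ssel M π φ := by simp [mem_Ssel, ho]
    have hφ : φ e = o := subext_toSub_iff.1 (execAux_subext_toSub _) e o ho
    cases hψ : ψ e with
    | none => simp [observe, hψ, hsel, hφ]
    | some o' => simpa [observe, hψ, ← hφ] using (subext_toSub_iff.1 h e o' hψ).symm
  rw [← sum_filter, filter_filter]
  calc M.Q - M.f ψ ≤ M.f (cover M π φ) - M.f ψ := by gcongr; exact hπ.Q_le_f_cover φ
    _ ≤ M.f (observe ψ φ {e | ψ e = none ∧ e ∈ Ssel M π φ}) - M.f ψ := by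
        gcongr; exact M.f_mono _ _ hcover
    _ ≤ _ := f_observe_sub_le M φ (by simp +contextual)

namespace visits

lemma subext_toSub (h : visits M π φ ψ) : subext ψ (toSub φ) := by
  obtain ⟨n, rfl⟩ := h
  exact execAux_subext_toSub n

lemma of_subext_toSub (h : visits M π φ ψ) (h' : subext ψ (toSub φ')) : visits M π φ' ψ := by
  obtain ⟨n, rfl⟩ := h
  exact ⟨n, execAux_eq_of_subext_toSub h'⟩

lemma next (h : visits M π φ ψ) (hψ : M.f ψ < M.Q) :
    visits M π φ (updateSub ψ (π ψ) (φ (π ψ))) := by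
  obtain ⟨n, rfl⟩ := h
  exact ⟨n + 1, execAux_succ_of_lt hψ⟩

lemma subext_or_next_subext (h : visits M π φ ψ) (hψ : M.f ψ < M.Q) (h' : visits M π φ ψ') :
    subext ψ' ψ ∨ subext (updateSub ψ (π ψ) (φ (π ψ))) ψ' := by
  obtain ⟨n, rfl⟩ := h
  obtain ⟨m, rfl⟩ := h'
  obtain hmn | hnm := le_or_gt m n
  · exact .inl (execAux_subext_of_le hmn)
  · exact .inr (execAux_succ_of_lt hψ ▸ execAux_subext_of_le hnm)

end visits

lemma dependsOn_visits (π : Sub E O → E) (ψ : Sub E O) :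
    DependsOn (fun φ => visits M π φ ψ) {e | ψ e ≠ none} :=
  dependsOn_of_imp fun φ φ' h hv => hv.of_subext_toSub <| subext_toSub_iff.2 fun e o ho => by
    rw [← h e (by simp [ho])]
    exact subext_toSub_iff.1 hv.subext_toSub e o ho

lemma exists_visits_of_execAux_ne_none {e : E} (h : execAux M π φ n e ≠ none) :
    ∃ ψ, visits M π φ ψ ∧ M.f ψ < M.Q ∧ π ψ = e := by
  induction n with
  | zero => exact absurd rfl h
  | succ n ih =>
    obtain hf | hf := lt_or_ge (M.f (execAux M π φ n)) M.Q
    · obtain rfl | he := eq_or_ne e (π (execAux M π φ n))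
      · exact ⟨_, ⟨n, rfl⟩, hf, rfl⟩
      · rw [execAux_succ_of_lt hf, updateSub_eq_update, Function.update_of_ne he] at h
        exact ih h
    · exact ih (execAux_succ_of_ge hf ▸ h)

lemma C_le_sum_visits (π : Sub E O → E) (φ : E → O) :
    C M π φ ≤ ∑ ψ with M.f ψ < M.Q, if visits M π φ ψ then M.c (π ψ) else 0 := by
  have hsub : Ssel M π φ ⊆ image π {ψ | M.f ψ < M.Q ∧ visits M π φ ψ} := by
    intro e he
    obtain ⟨ψ, hv, hψ, rfl⟩ := exists_visits_of_execAux_ne_none (mem_Ssel.1 he)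
    exact mem_image_of_mem π (by simp [hv, hψ])
  rw [← sum_filter, filter_filter]
  exact (sum_le_sum_of_subset_of_nonneg hsub fun e _ _ => (M.c_pos e).le).trans
    (sum_image_le_of_nonneg fun e _ => (M.c_pos e).le)

lemma Ex_C_le_sum_visits (M : Problem E O) (π : Sub E O → E) :
    Ex M (C M π) ≤ ∑ ψ with M.f ψ < M.Q, Pr M (fun φ => visits M π φ ψ) * M.c (π ψ) :=
  calc Ex M (C M π)
      ≤ Ex M fun φ => ∑ ψ with M.f ψ < M.Q, if visits M π φ ψ then M.c (π ψ) else 0 :=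
        Ex_mono M fun φ _ => C_le_sum_visits π φ
    _ = _ := by simp only [Ex_sum, Ex_ite_const]

lemma Ex_C_eq_sum_Pr_mem_Ssel (M : Problem E O) (π : Sub E O → E) :
    Ex M (C M π) = ∑ e, Pr M (fun φ => e ∈ Ssel M π φ) * M.c e :=
  calc Ex M (C M π) = Ex M fun φ => ∑ e, if e ∈ Ssel M π φ then M.c e else 0 := by
        simp only [sum_ite_mem, univ_inter]
        rfl
    _ = _ := by simp only [Ex_sum, Ex_ite_const]

lemma mem_Nnodes_of_visits (hφ : 0 < M.p φ) (hv : visits M π φ ψ) (hψ : M.f ψ < M.Q) :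
    ψ ∈ Nnodes M π := by
  simp [Nnodes, hψ, Pr_pos M (A := fun φ => visits M π φ ψ) hφ hv]

lemma f_lt_Q_of_mem_Nnodes (h : ψ ∈ Nnodes M π) : M.f ψ < M.Q :=
  (mem_filter.1 h).2.1

end Execution

section Levels

variable {M} {π σ : Sub E O → E} {φ : E → O} {ψ ψ' : Sub E O} {b : ℝ} {e : E}

lemma IsPolicy.leadsTo_iff (hσ : IsPolicy M σ) (hb : b < M.Q) :
    leadsTo M σ b ψ φ ↔
      visits M σ φ ψ ∧ M.f ψ ≤ b ∧ b < M.f (updateSub ψ (σ ψ) (φ (σ ψ))) := by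
  refine and_congr_right fun hv => and_congr_right fun hψb => ?_
  have hψ := hψb.trans_lt hb
  constructor
  · intro hlast
    by_contra! hnext
    have hnone := (hlast _ (hv.next hψ) hnext).eq_none (hσ ψ hψ)
    simp [updateSub_self] at hnone
  · intro hnext ψ' hv' hψ'
    exact (hv.subext_or_next_subext hψ hv').resolve_right fun h =>
      (hnext.trans_le (M.f_mono _ _ h)).not_ge hψ'

/-- The event that `e` may be charged at `ψ` for level `b`: this is `ψ ↝ b` with `e ∉ dom ψ`,
enlarged to all visits of `ψ` (of utility at most `b`) if `e` is the item that `σ` selects there. -/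
def Charges (M : Problem E O) (σ : Sub E O → E) (b : ℝ) (e : E) (ψ : Sub E O) (φ : E → O) : Prop :=
  visits M σ φ ψ ∧ M.f ψ ≤ b ∧ ψ e = none ∧ (σ ψ = e ∨ leadsTo M σ b ψ φ)

lemma IsPolicy.dependsOn_charges (hσ : IsPolicy M σ) (hb : b < M.Q) (e : E) (ψ : Sub E O) :
    DependsOn (Charges M σ b e ψ) {e}ᶜ := by
  refine dependsOn_of_imp fun φ φ' h ⟨hv, hψb, he, hcharge⟩ => ?_
  have hdom : {e' | ψ e' ≠ none} ⊆ ({e}ᶜ : Set E) := fun e' he' hee' => he' (hee' ▸ he)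
  have hv' : visits M σ φ' ψ := ((dependsOn_visits σ ψ).mono hdom h).mp hv
  refine ⟨hv', hψb, he, or_iff_not_imp_left.2 fun hσe => ?_⟩
  have hnext := ((hσ.leadsTo_iff hb).1 (hcharge.resolve_left hσe)).2.2
  exact (hσ.leadsTo_iff hb).2 ⟨hv', hψb, h (σ ψ) hσe ▸ hnext⟩

lemma Charges.unique (hb : b < M.Q) (h : Charges M σ b e ψ φ) (h' : Charges M σ b e ψ' φ) :
    ψ = ψ' := by
  have hsub : ∀ {ψ ψ'}, Charges M σ b e ψ φ → Charges M σ b e ψ' φ → subext ψ' ψ := by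
    rintro ψ ψ' ⟨hv, hψb, -, hσe | hlast⟩ ⟨hv', hψb', he', -⟩
    · refine (hv.subext_or_next_subext (hψb.trans_lt hb) hv').resolve_right fun hnext => ?_
      have hnone := hnext.eq_none (hσe ▸ he')
      simp [updateSub_self] at hnone
    · exact hlast.2.2 ψ' hv' hψb'
  exact (hsub h' h).antisymm (hsub h h')

lemma IsPolicy.Q_sub_mul_Pr_leadsTo_le (hπ : IsPolicy M π) (σ : Sub E O → E) (b : ℝ)
    (ψ : Sub E O) :
    (M.Q - b) * Pr M (leadsTo M σ b ψ) ≤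
      ∑ e with ψ e = none,
        Ex M fun φ => if e ∈ Ssel M π φ ∧ leadsTo M σ b ψ φ then Fm M ψ e φ else 0 := by
  rw [mul_comm, ← Ex_ite_const, ← Ex_sum]
  refine Ex_mono M fun φ _ => ?_
  by_cases hlast : leadsTo M σ b ψ φ
  · simpa [hlast] using (sub_le_sub_left hlast.2.1 M.Q).trans
      (hπ.Q_sub_le_sum_Ssel hlast.1.subext_toSub)
  · simp [hlast]

end Levels

/-- The expected unit price that `σ` pays at utility level `b`. In the notation of the paper, the
expected revenue from the `i`-th marker is `E[λ_i] = ε_i * expectedPrice M σ (f (ρ i))`. -/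
def expectedPrice (σ : Sub E O → E) (b : ℝ) : ℝ :=
  ∑ ψ with M.f ψ < M.Q, price M ψ (σ ψ) * Pr M (leadsTo M σ b ψ)

namespace IsGreedy

variable {M} {α : ℝ} {π σ : Sub E O → E} {ψ : Sub E O} {b : ℝ}

lemma Ex_Fm_pos (hσ : IsGreedy M α σ) (hψ : M.f ψ < M.Q) : 0 < Ex M (Fm M ψ (σ ψ)) := by
  obtain ⟨e, he, hpos⟩ := exists_Ex_Fm_pos M hψ
  have hprod : 0 < α * M.c e * Ex M (Fm M ψ (σ ψ)) :=
    (mul_pos (M.c_pos _) hpos).trans_le (hσ.2 ψ hψ e he)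
  exact (Ex_nonneg M (Fm_nonneg M (hσ.1 ψ hψ))).lt_of_ne' (right_ne_zero_of_mul hprod.ne')

lemma one_le (hσ : IsGreedy M α σ) : 1 ≤ α := by
  have hroot : M.f (fun _ => none) < M.Q := M.f_empty ▸ M.Q_pos
  have hpos := mul_pos (M.c_pos (σ fun _ => none)) (hσ.Ex_Fm_pos hroot)
  have hself := hσ.2 (fun _ => none) hroot (σ fun _ => none) rfl
  rw [mul_assoc] at hself
  exact (le_mul_iff_one_le_left hpos).1 hself

lemma price_nonneg (hσ : IsGreedy M α σ) (hψ : M.f ψ < M.Q) : 0 ≤ price M ψ (σ ψ) :=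
  div_nonneg (M.c_pos _).le (hσ.Ex_Fm_pos hψ).le

lemma price_mul_Ex_Fm_self (hσ : IsGreedy M α σ) (hψ : M.f ψ < M.Q) :
    price M ψ (σ ψ) * Ex M (Fm M ψ (σ ψ)) = M.c (σ ψ) :=
  div_mul_cancel₀ _ (hσ.Ex_Fm_pos hψ).ne'

lemma price_mul_Ex_Fm_le (hσ : IsGreedy M α σ) (hψ : M.f ψ < M.Q) {e : E} (he : ψ e = none) :
    price M ψ (σ ψ) * Ex M (Fm M ψ e) ≤ α * M.c e := by
  rw [price, div_mul_eq_mul_div, div_le_iff₀ (hσ.Ex_Fm_pos hψ)]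
  exact hσ.2 ψ hψ e he

lemma price_mul_Ex_le_charge (hσ : IsGreedy M α σ) (π : Sub E O → E) (hb : b < M.Q)
    (hψ : M.f ψ < M.Q) {e : E} (he : ψ e = none) :
    price M ψ (σ ψ) *
        Ex M (fun φ => if e ∈ Ssel M π φ ∧ leadsTo M σ b ψ φ then Fm M ψ e φ else 0) ≤
      α * M.c e * Pr M (fun φ => e ∈ Ssel M π φ ∧ Charges M σ b e ψ φ) := by
  have hdep : DependsOn (fun φ => e ∈ Ssel M π φ ∧ Charges M σ b e ψ φ) {e}ᶜ := fun φ φ' h =>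
    congrArg₂ And (dependsOn_mem_Ssel π e h) (hσ.1.dependsOn_charges hb e ψ h)
  calc _ ≤ price M ψ (σ ψ) *
        Ex M (fun φ => if e ∈ Ssel M π φ ∧ Charges M σ b e ψ φ then Fm M ψ e φ else 0) := by
        refine mul_le_mul_of_nonneg_left (Ex_mono M fun φ _ => ?_) (hσ.price_nonneg hψ)
        have hF := Fm_nonneg M he φ
        split_ifs with hlast hcharge
        · exact le_rfl
        · exact absurd ⟨hlast.1, hlast.2.1, hlast.2.2.1, he, .inr hlast.2⟩ hcharge
        · exact hF
        · exact le_rfl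
    _ = price M ψ (σ ψ) * Ex M (Fm M ψ e) *
          Pr M (fun φ => e ∈ Ssel M π φ ∧ Charges M σ b e ψ φ) := by
        rw [Ex_ite_Fm M hdep]
        ring
    _ ≤ _ := mul_le_mul_of_nonneg_right (hσ.price_mul_Ex_Fm_le hψ he) (Pr_nonneg M _)

theorem Q_sub_mul_expectedPrice_le (hσ : IsGreedy M α σ) (hπ : IsPolicy M π) (hb : b < M.Q) :
    (M.Q - b) * expectedPrice M σ b ≤ α * Ex M (C M π) := by
  let P : E → Sub E O → ℝ := fun e ψ => Pr M fun φ => e ∈ Ssel M π φ ∧ Charges M σ b e ψ φ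
  calc (M.Q - b) * expectedPrice M σ b
      = ∑ ψ with M.f ψ < M.Q, price M ψ (σ ψ) * ((M.Q - b) * Pr M (leadsTo M σ b ψ)) := by
        simp only [expectedPrice, mul_sum, mul_left_comm]
    _ ≤ ∑ ψ with M.f ψ < M.Q, ∑ e with ψ e = none, α * M.c e * P e ψ := by
        refine sum_le_sum fun ψ hψ => ?_
        have hψ : M.f ψ < M.Q := (mem_filter.1 hψ).2
        refine (mul_le_mul_of_nonneg_left (hπ.Q_sub_mul_Pr_leadsTo_le σ b ψ)
          (hσ.price_nonneg hψ)).trans ?_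
        rw [mul_sum]
        exact sum_le_sum fun e he =>
          hσ.price_mul_Ex_le_charge π hb hψ (mem_filter.1 he).2
    _ = ∑ e, ∑ ψ with M.f ψ < M.Q ∧ ψ e = none, α * M.c e * P e ψ :=
        sum_comm' (by simp)
    _ ≤ ∑ e, α * M.c e * Pr M (fun φ => e ∈ Ssel M π φ) := by
        refine sum_le_sum fun e _ => ?_
        rw [← mul_sum]
        exact mul_le_mul_of_nonneg_left
          (sum_Pr_le_Pr M (fun ψ _ φ h => h.1) fun φ ψ _ ψ' _ h h' => h.2.unique hb h'.2)
          (mul_nonneg (zero_le_one.trans hσ.one_le) (M.c_pos e).le)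
    _ = α * Ex M (C M π) := by
        rw [Ex_C_eq_sum_Pr_mem_Ssel, mul_sum]
        exact sum_congr rfl fun e _ => by ring

end IsGreedy

lemma succ_sub_nonneg_of_monotoneOn {v : ℕ → ℝ} {m n i : ℕ} (hv : MonotoneOn v (Set.Icc m n))
    (hi : i ∈ Ico m n) : 0 ≤ v (i + 1) - v i := by
  rw [mem_Ico] at hi
  exact sub_nonneg.2 (hv ⟨hi.1, hi.2.le⟩ ⟨by omega, hi.2⟩ i.le_succ)

lemma sub_le_sum_Ico_of_monotoneOn {v : ℕ → ℝ} {m n : ℕ} (hv : MonotoneOn v (Set.Icc m n))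
    {j k : ℕ} (hj : j ∈ Set.Icc m n) (hk : k ∈ Set.Icc m n) :
    v k - v j ≤ ∑ i ∈ Ico m n with v j ≤ v i ∧ v i < v k, (v (i + 1) - v i) := by
  obtain hjk | hkj := le_total j k
  · have hmem : ∀ i ∈ Ico j k, i ∈ Ico m n ∧ v j ≤ v i ∧ v (i + 1) ≤ v k := fun i hi => by
      rw [mem_Ico] at hi
      have hi' : i ∈ Ico m n := mem_Ico.2 ⟨hj.1.trans hi.1, hi.2.trans_le hk.2⟩
      obtain ⟨hmi, hin⟩ := mem_Ico.1 hi'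
      exact ⟨hi', hv hj ⟨hmi, hin.le⟩ hi.1, hv ⟨by omega, hin⟩ hk hi.2⟩
    rw [← sum_Ico_sub v hjk, sum_filter]
    refine (sum_le_sum fun i hi => ?_).trans
      (sum_le_sum_of_subset_of_nonneg (fun i hi => (hmem i hi).1) fun i hi _ => ?_)
    · split_ifs with hlt
      · exact le_rfl
      · have hki : v k ≤ v i := not_lt.1 fun h => hlt ⟨(hmem i hi).2.1, h⟩
        linarith [(hmem i hi).2.2]
    · split_ifs
      exacts [succ_sub_nonneg_of_monotoneOn hv hi, le_rfl]
  · exact (sub_nonpos.2 (hv hk hj hkj)).trans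
      (sum_nonneg fun i hi =>
        succ_sub_nonneg_of_monotoneOn hv (mem_filter.1 hi).1)

section Grid

variable {M} {σ : Sub E O → E} {v : ℕ → ℝ} {m n : ℕ}

lemma IsPolicy.Fm_le_sum_leadsTo (hσ : IsPolicy M σ) (hv : MonotoneOn v (Set.Icc m n))
    (hmn : m ≤ n) (hvQ : v n = M.Q) (hnodes : ∀ ψ ∈ Nnodes M σ, M.f ψ ∈ v '' Set.Icc m n)
    {φ : E → O} (hφ : 0 < M.p φ) {ψ : Sub E O} (hψv : visits M σ φ ψ) (hψ : M.f ψ < M.Q) :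
    Fm M ψ (σ ψ) φ ≤ ∑ i ∈ Ico m n, if leadsTo M σ (v i) ψ φ then v (i + 1) - v i else 0 := by
  have hlevel : ∀ ψ', visits M σ φ ψ' → ∃ k ∈ Set.Icc m n, v k = M.f ψ' := fun ψ' hv' => by
    obtain hlt | hge := lt_or_ge (M.f ψ') M.Q
    · exact hnodes ψ' (mem_Nnodes_of_visits hφ hv' hlt)
    · exact ⟨n, ⟨hmn, le_rfl⟩,
        hvQ.trans (hge.antisymm (f_le_Q_of_subext_toSub M hv'.subext_toSub))⟩
  obtain ⟨j, hj, hvj⟩ := hlevel ψ hψv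
  obtain ⟨k, hk, hvk⟩ := hlevel _ (hψv.next hψ)
  have hcross : ∀ i, v j ≤ v i ∧ v i < v k → leadsTo M σ (v i) ψ φ := fun i hi =>
    (hσ.leadsTo_iff (hi.2.trans_le (hvQ ▸ hv hk ⟨hmn, le_rfl⟩ hk.2))).2
      ⟨hψv, hvj ▸ hi.1, hvk ▸ hi.2⟩
  rw [Fm, ← hvj, ← hvk, ← sum_filter]
  refine (sub_le_sum_Ico_of_monotoneOn hv hj hk).trans
    (sum_le_sum_of_subset_of_nonneg ?_ fun i hi _ => ?_)
  · exact monotone_filter_right _ fun i _ => hcross i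
  · exact succ_sub_nonneg_of_monotoneOn hv (mem_filter.1 hi).1

theorem IsGreedy.Ex_C_le_sum_expectedPrice {α : ℝ} (hσ : IsGreedy M α σ)
    (hv : MonotoneOn v (Set.Icc m n)) (hmn : m ≤ n) (hvQ : v n = M.Q)
    (hnodes : ∀ ψ ∈ Nnodes M σ, M.f ψ ∈ v '' Set.Icc m n) :
    Ex M (C M σ) ≤ ∑ i ∈ Ico m n, (v (i + 1) - v i) * expectedPrice M σ (v i) := by
  have hcost : ∀ ψ, M.f ψ < M.Q → Pr M (fun φ => visits M σ φ ψ) * M.c (σ ψ) ≤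
      price M ψ (σ ψ) * ∑ i ∈ Ico m n, Pr M (leadsTo M σ (v i) ψ) * (v (i + 1) - v i) := by
    intro ψ hψ
    have hdom : {e | ψ e ≠ none} ⊆ ({σ ψ}ᶜ : Set E) := fun e he hσe => he (hσe ▸ hσ.1 ψ hψ)
    have hdep := (dependsOn_visits (M := M) σ ψ).mono hdom
    calc _ = price M ψ (σ ψ) *
          Ex M (fun φ => if visits M σ φ ψ then Fm M ψ (σ ψ) φ else 0) := by
          rw [Ex_ite_Fm M hdep, mul_left_comm, hσ.price_mul_Ex_Fm_self hψ]
      _ ≤ price M ψ (σ ψ) * Ex M (fun φ => ∑ i ∈ Ico m n,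
          if leadsTo M σ (v i) ψ φ then v (i + 1) - v i else 0) := by
          refine mul_le_mul_of_nonneg_left (Ex_mono M fun φ hφ => ?_) (hσ.price_nonneg hψ)
          split_ifs with hψv
          · exact hσ.1.Fm_le_sum_leadsTo hv hmn hvQ hnodes hφ hψv hψ
          · simp [leadsTo, hψv]
      _ = _ := by simp only [Ex_sum, Ex_ite_const]
  refine (Ex_C_le_sum_visits M σ).trans
    ((sum_le_sum fun ψ hψ => hcost ψ (mem_filter.1 hψ).2).trans_eq ?_)
  simp only [expectedPrice, mul_sum]
  rw [sum_comm]
  exact sum_congr rfl fun i _ => sum_congr rfl fun ψ _ => by ring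

theorem IsGreedy.Ex_C_le_of_grid {α : ℝ} (hσ : IsGreedy M α σ) {π : Sub E O → E}
    (hπ : IsPolicy M π) (hv : MonotoneOn v (Set.Icc m n)) (hmn : m ≤ n) (hvQ : v n = M.Q)
    (hlt : ∀ i ∈ Ico m n, v i < M.Q) (hnodes : ∀ ψ ∈ Nnodes M σ, M.f ψ ∈ v '' Set.Icc m n) :
    Ex M (C M σ) ≤ α * Ex M (C M π) * ∑ i ∈ Ico m n, (v (i + 1) - v i) / (M.Q - v i) := by
  refine (hσ.Ex_C_le_sum_expectedPrice hv hmn hvQ hnodes).trans ?_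
  rw [mul_sum]
  refine sum_le_sum fun i hi => ?_
  have hgap : 0 < M.Q - v i := sub_pos.2 (hlt i hi)
  rw [mul_div_left_comm]
  refine mul_le_mul_of_nonneg_left ((le_div_iff₀' hgap).2 ?_) (succ_sub_nonneg_of_monotoneOn hv hi)
  exact hσ.Q_sub_mul_expectedPrice_le hπ (hlt i hi)

end Grid

/-- The utilities `f (ρ 1), …, f (ρ t)` followed by the constant value `Q`, so that
`levels M ρ t (t + 1)` is the value `f (ρ_{t+1}) = Q` of the paper. -/
def levels (ρ : ℕ → Sub E O) (t : ℕ) (i : ℕ) : ℝ := if i ≤ t then M.f (ρ i) else M.Q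

section Enumeration

variable {M} {t : ℕ} {ρ : ℕ → Sub E O}

lemma levels_of_le {i : ℕ} (h : i ≤ t) : levels M ρ t i = M.f (ρ i) := if_pos h

lemma levels_of_lt {i : ℕ} (h : t < i) : levels M ρ t i = M.Q := if_neg h.not_ge

lemma monotoneOn_levels (hmono : ∀ i j, 1 ≤ i → i ≤ j → j ≤ t → M.f (ρ i) ≤ M.f (ρ j))
    (hle : ∀ i, 1 ≤ i → i ≤ t → M.f (ρ i) ≤ M.Q) : MonotoneOn (levels M ρ t) (Set.Ici 1) := by
  intro i hi j _ hij
  obtain hjt | htj := le_or_gt j t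
  · rw [levels_of_le hjt, levels_of_le (hij.trans hjt)]
    exact hmono i j hi hij hjt
  · rw [levels_of_lt htj, levels]
    split_ifs with hit
    exacts [hle i hi hit, le_rfl]

lemma levels_succ_sub {ε : ℕ → ℝ} (hε : ∀ i, 1 ≤ i → i < t → ε i = M.f (ρ (i + 1)) - M.f (ρ i))
    (hεt : 1 ≤ t → ε t = M.Q - M.f (ρ t)) {i : ℕ} (hi : 1 ≤ i) (hit : i ≤ t) :
    levels M ρ t (i + 1) - levels M ρ t i = ε i := by
  rw [levels_of_le hit]
  obtain rfl | hlt := hit.eq_or_lt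
  · rw [levels_of_lt i.lt_succ_self, hεt hi]
  · rw [levels_of_le hlt, hε i hi hlt]

lemma exists_eq_of_mem_of_card_eq {X : Type*} {N : Finset X} {t : ℕ} {ρ : ℕ → X}
    (hcard : t = #N) (hmem : ∀ i, 1 ≤ i → i ≤ t → ρ i ∈ N)
    (hinj : ∀ i j, 1 ≤ i → i ≤ t → 1 ≤ j → j ≤ t → ρ i = ρ j → i = j) {x : X} (hx : x ∈ N) :
    ∃ i, 1 ≤ i ∧ i ≤ t ∧ ρ i = x := by
  have hsurj : Set.SurjOn ρ (Icc 1 t) N := by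
    refine surjOn_of_injOn_of_card_le ρ ?_ ?_ (by simp [← hcard])
    · exact fun i hi => hmem i (mem_Icc.1 hi).1 (mem_Icc.1 hi).2
    · intro i hi j hj
      rw [mem_coe, mem_Icc] at hi hj
      exact hinj i j hi.1 hi.2 hj.1 hj.2
  obtain ⟨i, hi, hix⟩ := hsurj hx
  rw [mem_coe, mem_Icc] at hi
  exact ⟨i, hi.1, hi.2, hix⟩

end Enumeration

theorem greedy_cost_bound_general {α : ℝ} {σ : Sub E O → E} (hσ : IsGreedy M α σ)
    {π : Sub E O → E} (hπ : IsPolicy M π) {t : ℕ} {ρ : ℕ → Sub E O}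
    (hcard : t = (Nnodes M σ).card)
    (hρmem : ∀ i, 1 ≤ i → i ≤ t → ρ i ∈ Nnodes M σ)
    (hρinj : ∀ i j, 1 ≤ i → i ≤ t → 1 ≤ j → j ≤ t → ρ i = ρ j → i = j)
    (hρmono : ∀ i j, 1 ≤ i → i ≤ j → j ≤ t → M.f (ρ i) ≤ M.f (ρ j))
    {ε : ℕ → ℝ}
    (hε : ∀ i, 1 ≤ i → i < t → ε i = M.f (ρ (i + 1)) - M.f (ρ i))
    (hεt : 1 ≤ t → ε t = M.Q - M.f (ρ t)) :
    Ex M (C M σ) ≤ α * Ex M (C M π) * ∑ i ∈ Icc 1 t, ε i / (M.Q - M.f (ρ i)) := by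
  have hlt : ∀ i, 1 ≤ i → i ≤ t → M.f (ρ i) < M.Q := fun i hi hit =>
    f_lt_Q_of_mem_Nnodes (hρmem i hi hit)
  have hmono : MonotoneOn (levels M ρ t) (Set.Icc 1 (t + 1)) :=
    (monotoneOn_levels hρmono fun i hi hit => (hlt i hi hit).le).mono fun i hi => hi.1
  have hlevels_lt : ∀ i ∈ Ico 1 (t + 1), levels M ρ t i < M.Q := fun i hi => by
    rw [mem_Ico, Nat.lt_succ_iff] at hi
    rw [levels_of_le hi.2]
    exact hlt i hi.1 hi.2
  have hnodes : ∀ ψ ∈ Nnodes M σ, M.f ψ ∈ levels M ρ t '' Set.Icc 1 (t + 1) := fun ψ hψ => by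
    obtain ⟨i, hi, hit, rfl⟩ := exists_eq_of_mem_of_card_eq hcard hρmem hρinj hψ
    exact ⟨i, ⟨hi, hit.trans t.le_succ⟩, levels_of_le hit⟩
  refine (hσ.Ex_C_le_of_grid hπ hmono (by omega) (levels_of_lt t.lt_succ_self) hlevels_lt
    hnodes).trans_eq ?_
  rw [Ico_add_one_right_eq_Icc]
  congr! 2 with i hi
  rw [mem_Icc] at hi
  rw [levels_succ_sub hε hεt hi.1 hi.2, levels_of_le hi.2]

/-- The expected cost of the adaptive greedy policy satisfies
`E[C(σ)] ≤ α·E[C(π*)]·∑_{i=1}^{|N(σ)|} ε_i / (Q − f(ρ_i))`. -/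
theorem greedy_cost_bound
    (M : Problem E O) (α : ℝ) (hα : 1 ≤ α)
    (σ : Sub E O → E) (hσ : IsGreedy M α σ)
    (πs : Sub E O → E) (hπs : IsOptimal M πs)
    (t : ℕ) (ρ : ℕ → Sub E O)
    (hcard : t = (Nnodes M σ).card)
    (hρmem : ∀ i, 1 ≤ i → i ≤ t → ρ i ∈ Nnodes M σ)
    (hρinj : ∀ i j, 1 ≤ i → i ≤ t → 1 ≤ j → j ≤ t → ρ i = ρ j → i = j)
    (hρmono : ∀ i j, 1 ≤ i → i ≤ j → j ≤ t → M.f (ρ i) ≤ M.f (ρ j))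
    (ε : ℕ → ℝ)
    (hε : ∀ i, 1 ≤ i → i < t → ε i = M.f (ρ (i + 1)) - M.f (ρ i))
    (hεt : 1 ≤ t → ε t = M.Q - M.f (ρ t)) :
    Ex M (C M σ)
      ≤ α * Ex M (C M πs) * ∑ i ∈ Finset.Icc 1 t, ε i / (M.Q - M.f (ρ i)) :=
  greedy_cost_bound_general M hσ hπs.1 hcard hρmem hρinj hρmono hε hεt

end
end SSC
end

section
/- Let Q > 0 and η > 0, let t ≥ 1, and let 0 = a_1 ≤ a_2 ≤ … ≤ a_t < a_{t+1} = Q be real numbers with ε_i = a_{i+1} − a_i for i = 1, …, t and ε_t ≥ η. Then Σ_{i=1}^{t} ε_i/(Q − a_i) ≤ 1 + ln(Q/η). -/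
/-!
Common framework for the Stochastic Submodular Cover problem
(Hellerstein–Kletenik–Parthasarathy, "A Tight Bound for Stochastic Submodular Cover").
-/

namespace SSC

open Finset
open scoped Classical

noncomputable section

variable {E O : Type*}

variable [Fintype E] [DecidableEq E] [Fintype O] [DecidableEq O]

variable (M : Problem E O)

/-! With `d i = Q - a i`, the inequality `1 - x⁻¹ ≤ log x` bounds the `i`-th ratio
`1 - d (i + 1) / d i` by `log (d i) - log (d (i + 1))`, and these bounds telescope. The final ratio
is bounded by `1` instead, because `d` may vanish at the right end. -/

lemma sub_div_le_log_sub_log {x y : ℝ} (hx : 0 < x) (hy : 0 < y) :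
    (x - y) / x ≤ Real.log x - Real.log y :=
  calc (x - y) / x = 1 - (x / y)⁻¹ := by rw [inv_div, sub_div, div_self hx.ne']
    _ ≤ Real.log (x / y) := Real.one_sub_inv_le_log_of_pos (div_pos hx hy)
    _ = Real.log x - Real.log y := Real.log_div hx.ne' hy.ne'

lemma sum_Ico_sub_div_le_log_sub_log {d : ℕ → ℝ} {m n : ℕ} (hmn : m ≤ n)
    (hd : ∀ i ∈ Set.Icc m n, 0 < d i) :
    ∑ i ∈ Ico m n, (d i - d (i + 1)) / d i ≤ Real.log (d m) - Real.log (d n) :=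
  calc ∑ i ∈ Ico m n, (d i - d (i + 1)) / d i
      ≤ ∑ i ∈ Ico m n, (Real.log (d i) - Real.log (d (i + 1))) := by
        refine sum_le_sum fun i hi => ?_
        obtain ⟨hmi, hin⟩ := mem_Ico.mp hi
        exact sub_div_le_log_sub_log (hd i ⟨hmi, hin.le⟩) (hd (i + 1) ⟨by lia, hin⟩)
    _ = Real.log (d m) - Real.log (d n) := by
        simpa only [neg_sub_neg] using sum_Ico_sub (fun i => -Real.log (d i)) hmn

lemma sum_Icc_sub_div_le_one_add_log_sub_log {d : ℕ → ℝ} {m n : ℕ} (hmn : m ≤ n)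
    (hd : ∀ i ∈ Set.Icc m n, 0 < d i) (hlast : 0 ≤ d (n + 1)) :
    ∑ i ∈ Icc m n, (d i - d (i + 1)) / d i ≤ 1 + (Real.log (d m) - Real.log (d n)) := by
  have last_le_one : (d n - d (n + 1)) / d n ≤ 1 :=
    div_le_one_of_le₀ (sub_le_self _ hlast) (hd n ⟨hmn, le_rfl⟩).le
  rw [← sum_Ico_add_eq_sum_Icc hmn, add_comm]
  exact add_le_add last_le_one (sum_Ico_sub_div_le_log_sub_log hmn hd)

theorem sum_gap_ratio_le_log_general {Q η : ℝ} (hη : 0 < η) {m n : ℕ} (hmn : m ≤ n) {a : ℕ → ℝ}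
    (ha : ∀ i ∈ Set.Icc m n, a i < Q) (ha_succ : a (n + 1) ≤ Q) (hlast : η ≤ Q - a n) :
    ∑ i ∈ Icc m n, (a (i + 1) - a i) / (Q - a i) ≤ 1 + Real.log ((Q - a m) / η) := by
  have hm : 0 < Q - a m := sub_pos.mpr (ha m ⟨le_rfl, hmn⟩)
  calc ∑ i ∈ Icc m n, (a (i + 1) - a i) / (Q - a i)
      = ∑ i ∈ Icc m n, ((Q - a i) - (Q - a (i + 1))) / (Q - a i) := by
        simp only [sub_sub_sub_cancel_left]
    _ ≤ 1 + (Real.log (Q - a m) - Real.log (Q - a n)) :=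
        sum_Icc_sub_div_le_one_add_log_sub_log (d := fun i => Q - a i) hmn
          (fun i hi => sub_pos.mpr (ha i hi)) (sub_nonneg.mpr ha_succ)
    _ ≤ 1 + (Real.log (Q - a m) - Real.log η) := by gcongr
    _ = 1 + Real.log ((Q - a m) / η) := by rw [Real.log_div hm.ne' hη.ne']

/-- Azar–Gamzu style bound, real-valued case: for
`0 = a 1 ≤ a 2 ≤ ⋯ ≤ a t < a (t+1) = Q` with last gap `Q - a t ≥ η > 0`,
`∑_{i=1}^{t} (a (i+1) - a i) / (Q - a i) ≤ 1 + ln (Q / η)`. -/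
theorem sum_gap_ratio_le_log
    (Q η : ℝ) (hQ : 0 < Q) (hη : 0 < η) (t : ℕ) (ht : 1 ≤ t)
    (a : ℕ → ℝ) (ha1 : a 1 = 0)
    (hmono : ∀ i, 1 ≤ i → i < t → a i ≤ a (i + 1))
    (hat : a t < Q) (hat1 : a (t + 1) = Q)
    (hlast : η ≤ Q - a t) :
    ∑ i ∈ Finset.Icc 1 t, (a (i + 1) - a i) / (Q - a i) ≤ 1 + Real.log (Q / η) := by
  have a_mono : MonotoneOn a (Set.Icc 1 t) :=
    monotoneOn_of_le_add_one Set.ordConnected_Icc fun i _ hi hi' => hmono i hi.1 hi'.2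
  simpa only [ha1, sub_zero] using sum_gap_ratio_le_log_general hη ht
    (fun i hi => (a_mono hi ⟨ht, le_rfl⟩ hi.2).trans_lt hat) hat1.le hlast

end
end SSC
end
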